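/- arXiv:1106.5598 — 9 statements merged into one kernel-verified Lean document; each statement's English description precedes it below -/
import Mathlib

section
/- Let n, m ≥ 1 be integers, let X₁,…,Xₙ be i.i.d. uniform on [0,1], and let Y₁,…,Yₘ be i.i.d. with law ν on ℝ having continuous cumulative distribution function G satisfying G(x) ≥ x for all x ∈ [0,1], the Y's independent of the X's. Then P(max(Y₁,…,Yₘ) < min(X₁,…,Xₙ)) ≥ n!·m!/(n+m)!, where n!·m!/(n+m)! is the value of this probability when ν is the uniform distribution on [0,1]. -/
/-!
Condition on `x = (X₁, …, Xₙ)` and write `M = min Xᵢ`. Given `x`, the event is `Yⱼ < M` for all `j`,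
of probability `ν (Iio M) ^ m`; continuity of `G` rules out an atom at `M`, so this is
`G M ^ m ≥ M ^ m`. It remains to evaluate `E[M ^ m]`. By the layer cake formula and
`P(M ≥ t) = (1 - t) ^ n`, it equals `∫₀¹ (1 - t) ^ n * m * t ^ (m - 1) dt`, a Beta integral with value
`m * B(m, n + 1) = n! * m! / (n + m)!` (`lintegral_minCoord_pow`).
-/

open MeasureTheory

/-- The smallest coordinate of a vector with at least one coordinate. -/
noncomputable def minCoord {n : ℕ} [NeZero n] (x : Fin n → ℝ) : ℝ :=
  Finset.univ.inf' Finset.univ_nonempty x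

lemma le_minCoord {n : ℕ} [NeZero n] (x : Fin n → ℝ) (t : ℝ) :
    t ≤ minCoord x ↔ ∀ i, t ≤ x i := by
  simp [minCoord]

lemma lt_minCoord {n : ℕ} [NeZero n] (x : Fin n → ℝ) (t : ℝ) :
    t < minCoord x ↔ ∀ i, t < x i := by
  simp [minCoord]

lemma minCoord_le {n : ℕ} [NeZero n] (x : Fin n → ℝ) (i : Fin n) : minCoord x ≤ x i :=
  Finset.inf'_le _ (Finset.mem_univ i)

lemma measurable_minCoord {n : ℕ} [NeZero n] : Measurable (minCoord (n := n)) := by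
  refine measurable_of_Ici fun t => ?_
  have : minCoord (n := n) ⁻¹' Set.Ici t = ⋂ i, {x | t ≤ x i} := by
    ext x; simp [le_minCoord]
  rw [this]
  exact MeasurableSet.iInter fun i => measurableSet_le measurable_const (measurable_pi_apply i)

lemma ae_minCoord_mem_Icc (n : ℕ) [NeZero n] :
    ∀ᵐ x ∂(Measure.pi fun _ : Fin n => volume.restrict (Set.Icc (0:ℝ) 1)),
      minCoord x ∈ Set.Icc (0:ℝ) 1 := by
  have h : ∀ᵐ x ∂(Measure.pi fun _ : Fin n => volume.restrict (Set.Icc (0:ℝ) 1)),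
      ∀ i, x i ∈ Set.Icc (0:ℝ) 1 :=
    Filter.eventually_all.2 fun i =>
      (Measure.tendsto_eval_ae_ae (μ := fun _ : Fin n => volume.restrict (Set.Icc (0:ℝ) 1))
        (i := i)).eventually (ae_restrict_mem measurableSet_Icc)
  filter_upwards [h] with x hx
  exact ⟨(le_minCoord x 0).2 fun i => (hx i).1, (minCoord_le x 0).trans (hx 0).2⟩

/-- The survival function of the minimum of `n` independent uniform variables. -/
lemma measure_le_minCoord (n : ℕ) [NeZero n] {t : ℝ} (ht : 0 < t) :
    (Measure.pi fun _ : Fin n => volume.restrict (Set.Icc (0:ℝ) 1)) {x | t ≤ minCoord x}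
      = ENNReal.ofReal (1 - t) ^ n := by
  have h1 : {x : Fin n → ℝ | t ≤ minCoord x} = Set.univ.pi fun _ => Set.Ici t := by
    ext x; simp [le_minCoord, Pi.le_def]
  have h2 : Set.Ici t ∩ Set.Icc 0 1 = Set.Icc t 1 := by
    ext s; simp only [Set.mem_inter_iff, Set.mem_Ici, Set.mem_Icc]
    exact ⟨fun h => ⟨h.1, h.2.2⟩, fun h => ⟨h.1, ht.le.trans h.1, h.2⟩⟩
  rw [h1, Measure.pi_pi]
  simp [Measure.restrict_apply measurableSet_Ici, h2]

lemma beta_nat (k n : ℕ) :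
    ProbabilityTheory.beta (k + 1) (n + 1)
      = (k.factorial : ℝ) * n.factorial / (n + (k + 1)).factorial := by
  rw [ProbabilityTheory.beta, Real.Gamma_nat_eq_factorial, Real.Gamma_nat_eq_factorial,
    ← Real.Gamma_nat_eq_factorial (n + (k + 1))]
  congr 2
  push_cast
  ring

/-- The `m`-th moment of the minimum of `n` independent uniform variables. -/
lemma lintegral_minCoord_pow (n m : ℕ) [NeZero n] (hm : 1 ≤ m) :
    ∫⁻ x, ENNReal.ofReal (minCoord x ^ m)
        ∂(Measure.pi fun _ : Fin n => volume.restrict (Set.Icc (0:ℝ) 1))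
      = ENNReal.ofReal ((n.factorial : ℝ) * m.factorial / (n + m).factorial) := by
  obtain ⟨k, rfl⟩ : ∃ k, m = k + 1 := ⟨m - 1, by omega⟩
  have hB : 0 < ProbabilityTheory.beta ((k:ℝ) + 1) (n + 1) :=
    ProbabilityTheory.beta_pos (by positivity) (by positivity)
  have hlc := lintegral_comp_eq_lintegral_meas_le_mul
    (Measure.pi fun _ : Fin n => volume.restrict (Set.Icc (0:ℝ) 1))
    (f := minCoord) (g := fun t : ℝ => ((k:ℝ) + 1) * t ^ k)
    ((ae_minCoord_mem_Icc n).mono fun x hx => hx.1) measurable_minCoord.aemeasurable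
    (fun t _ => (by fun_prop : Continuous fun t : ℝ => ((k:ℝ) + 1) * t ^ k).intervalIntegrable _ _)
    ((ae_restrict_mem measurableSet_Ioi).mono fun t (ht : 0 < t) => by positivity)
  have hint : ∀ s : ℝ, ∫ t in (0:ℝ)..s, ((k:ℝ) + 1) * t ^ k = s ^ (k + 1) := by
    intro s
    rw [intervalIntegral.integral_const_mul, integral_pow]
    field_simp
    simp
  simp only [hint] at hlc
  rw [hlc]
  -- The layer cake integrand is the Beta density up to the factor `(k + 1) * B(k + 1, n + 1)`.
  have hpdf : ∀ t ∈ Set.Ioi (0:ℝ),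
      (Measure.pi fun _ : Fin n => volume.restrict (Set.Icc (0:ℝ) 1)) {x | t ≤ minCoord x}
          * ENNReal.ofReal (((k:ℝ) + 1) * t ^ k)
        = ENNReal.ofReal (((k:ℝ) + 1) * ProbabilityTheory.beta ((k:ℝ) + 1) (n + 1))
          * ProbabilityTheory.betaPDF ((k:ℝ) + 1) (n + 1) t := by
    intro t (ht : 0 < t)
    rw [measure_le_minCoord n ht]
    rcases lt_or_ge t 1 with h1 | h1
    · rw [ProbabilityTheory.betaPDF_of_pos_lt_one ht h1,
        ← ENNReal.ofReal_pow (by linarith), ← ENNReal.ofReal_mul (by have := sub_pos.2 h1; positivity),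
        ← ENNReal.ofReal_mul (by positivity)]
      congr 1
      simp only [add_sub_cancel_right, Real.rpow_natCast]
      field_simp
    · rw [ProbabilityTheory.betaPDF_eq_zero_of_one_le h1,
        ENNReal.ofReal_of_nonpos (by linarith), zero_pow (NeZero.ne n), zero_mul, mul_zero]
  have hsupp : Function.support (ProbabilityTheory.betaPDF ((k:ℝ) + 1) (n + 1)) ⊆ Set.Ioi 0 := by
    intro t ht
    by_contra h
    exact ht (ProbabilityTheory.betaPDF_eq_zero_of_nonpos (not_lt.1 h))
  rw [setLIntegral_congr_fun measurableSet_Ioi hpdf,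
    lintegral_const_mul' _ _ ENNReal.ofReal_ne_top, setLIntegral_eq_of_support_subset hsupp,
    ProbabilityTheory.lintegral_betaPDF_eq_one (by positivity) (by positivity), mul_one, beta_nat,
    Nat.factorial_succ k]
  congr 1
  push_cast
  ring

/-- If `X₁,…,Xₙ` are i.i.d. uniform on `[0,1]` and `Y₁,…,Yₘ` are i.i.d. with law `ν` having
continuous cdf `G` satisfying `G x ≥ x` on `[0,1]`, independent of the `X`'s, then
`P(max Y < min X) ≥ n!·m!/(n+m)!`. -/
theorem ks_one_sided_unbiased_smallest_level (n m : ℕ) (hn : 1 ≤ n) (hm : 1 ≤ m)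
    (ν : Measure ℝ) [IsProbabilityMeasure ν]
    (G : ℝ → ℝ) (hG : ∀ t : ℝ, G t = (ν (Set.Iic t)).toReal) (hGcont : Continuous G)
    (hGx : ∀ x ∈ Set.Icc (0:ℝ) 1, x ≤ G x) :
    (((Measure.pi fun _ : Fin n => volume.restrict (Set.Icc (0:ℝ) 1)).prod
        (Measure.pi fun _ : Fin m => ν))
      {p : (Fin n → ℝ) × (Fin m → ℝ) | ∀ (i : Fin n) (j : Fin m), p.2 j < p.1 i}).toReal ≥
    (n.factorial : ℝ) * m.factorial / (n + m).factorial := by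
  have : NeZero n := ⟨by omega⟩
  have : IsProbabilityMeasure (volume.restrict (Set.Icc (0:ℝ) 1)) := ⟨by simp⟩
  have hIic : ∀ t, ENNReal.ofReal (G t) = ν (Set.Iic t) := fun t => by
    rw [hG, ENNReal.ofReal_toReal (measure_ne_top _ _)]
  -- Every `s < t` has `G s ≤ ν (Iio t)`; let `s → t⁻`.
  have hIio : ∀ t, ENNReal.ofReal (G t) ≤ ν (Set.Iio t) := fun t => by
    have hlim : Filter.Tendsto (fun s => ENNReal.ofReal (G s)) (nhdsWithin t (Set.Iio t))
        (nhds (ENNReal.ofReal (G t))) :=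
      ((ENNReal.continuous_ofReal.comp hGcont).tendsto t).mono_left nhdsWithin_le_nhds
    refine le_of_tendsto hlim ?_
    filter_upwards [self_mem_nhdsWithin] with s hs
    rw [hIic]
    exact measure_mono (Set.Iic_subset_Iio.2 hs)
  have hmeas : MeasurableSet
      {p : (Fin n → ℝ) × (Fin m → ℝ) | ∀ (i : Fin n) (j : Fin m), p.2 j < p.1 i} := by
    simp only [Set.ofPred_forall]
    exact MeasurableSet.iInter fun i => MeasurableSet.iInter fun j =>
      measurableSet_lt (by fun_prop) (by fun_prop)
  refine (ENNReal.ofReal_le_iff_le_toReal (measure_ne_top _ _)).1 ?_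
  rw [Measure.prod_apply hmeas, ← lintegral_minCoord_pow n m hm]
  refine lintegral_mono_ae ?_
  filter_upwards [ae_minCoord_mem_Icc n] with x hx
  have hsec : Prod.mk x ⁻¹' {p : (Fin n → ℝ) × (Fin m → ℝ) | ∀ (i : Fin n) (j : Fin m),
      p.2 j < p.1 i} = Set.univ.pi fun _ => Set.Iio (minCoord x) := by
    ext y
    simp only [Set.mem_preimage, Set.mem_ofPred_eq, Set.mem_univ_pi, Set.mem_Iio, lt_minCoord]
    exact forall_comm
  rw [hsec, Measure.pi_pi, Finset.prod_const, Finset.card_univ, Fintype.card_fin,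
    ENNReal.ofReal_pow hx.1]
  gcongr
  exact (ENNReal.ofReal_le_ofReal (hGx _ hx)).trans (hIio _)
end

section
/- Let n, m ≥ 2 be integers with n ≠ m, define G* : (0,1) → (0,1) by G*(x) = t/(1+t) with t = (x/(1−x))^{(n−1)/(m−1)}, and let ν be the Borel probability measure on [0,1] whose cumulative distribution function restricted to (0,1) is G*. If X₁,…,Xₙ are i.i.d. uniform on [0,1] and Y₁,…,Yₘ are i.i.d. with law ν, independent of the X's, then P(max(Y₁,…,Yₘ) < min(X₁,…,Xₙ) or max(X₁,…,Xₙ) < min(Y₁,…,Yₘ)) < 2·n!·m!/(n+m)!. -/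
open MeasureTheory

/-!
Conditioning on the index `k` at which the `X`-sample attains its minimum (resp. maximum) and on
the value `a = X k`, a union bound over `k` gives, with `G` the distribution function of `ν`,
`P ≤ n ∫₀¹ ((1 - a)^(n-1) G(a)^m + a^(n-1) (1 - G(a))^m) da` (`prob_le`, from `prob_slice`).
An upper bound is all that is needed, so ties never have to be shown negligible.

For fixed `a ∈ (0,1)` the integrand is a strictly convex function of the number `g = G(a)`, and
`G*(a)` is exactly its critical point. Hence the integrand is at most its value at `g = a`, and it
is strictly smaller whenever `G*(a) ≠ a`, that is (as `n ≠ m`) for all `a ≠ 1/2` (`scurve_lt`).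
Replacing `g` by `a` therefore increases the integral strictly, and the resulting Beta integrals
evaluate to `2 · n! · m! / (n+m)!` (`integral_pow_mul_one_sub_pow`).
-/

/-- Conditioning on the `k`-th coordinate of the first sample: given its value `a`, the remaining
coordinates of both samples are independent, so constraints on each of them relative to `a`
contribute a product of powers. -/
lemma prob_slice {N m : ℕ} (ρ ν : Measure ℝ) [IsProbabilityMeasure ρ] [IsProbabilityMeasure ν]
    (k : Fin (N + 1)) {S T : Set (ℝ × ℝ)} (hS : MeasurableSet S) (hT : MeasurableSet T) :
    ((Measure.pi fun _ : Fin (N + 1) => ρ).prod (Measure.pi fun _ : Fin m => ν))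
      {p | (∀ i : Fin N, (p.1 k, p.1 (k.succAbove i)) ∈ S) ∧ ∀ j, (p.1 k, p.2 j) ∈ T} =
    ∫⁻ a, ρ (Prod.mk a ⁻¹' S) ^ N * ν (Prod.mk a ⁻¹' T) ^ m ∂ρ := by
  have mp := ((measurePreserving_piFinSuccAbove (fun _ : Fin (N + 1) => ρ) k).prod
    (MeasurePreserving.id (Measure.pi fun _ : Fin m => ν)))
  have mp2 := (measurePreserving_prodAssoc ρ (Measure.pi fun _ : Fin N => ρ)
    (Measure.pi fun _ : Fin m => ν)).comp mp
  set E : Set (ℝ × (Fin N → ℝ) × (Fin m → ℝ)) :=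
    {q | (∀ i, (q.1, q.2.1 i) ∈ S) ∧ ∀ j, (q.1, q.2.2 j) ∈ T} with hE
  have hEm : MeasurableSet E := by
    have : E = (⋂ i, (fun q : ℝ × (Fin N → ℝ) × (Fin m → ℝ) => (q.1, q.2.1 i)) ⁻¹' S) ∩
        ⋂ j, (fun q : ℝ × (Fin N → ℝ) × (Fin m → ℝ) => (q.1, q.2.2 j)) ⁻¹' T := by
      ext q; simp [hE]
    rw [this]
    refine (MeasurableSet.iInter fun i => hS.preimage ?_).inter
      (MeasurableSet.iInter fun j => hT.preimage ?_) <;> fun_prop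
  have h1 := mp2.measure_preimage hEm.nullMeasurableSet
  refine Eq.trans ?_ (h1.trans ?_)
  · rfl
  · rw [Measure.prod_apply hEm]
    refine lintegral_congr fun a => ?_
    have : Prod.mk a ⁻¹' E = (Set.univ.pi fun _ => Prod.mk a ⁻¹' S) ×ˢ
        (Set.univ.pi fun _ => Prod.mk a ⁻¹' T) := by
      ext q; simp [hE]
    rw [this, Measure.prod_prod, Measure.pi_pi, Measure.pi_pi]
    simp

/-- The Beta integral at natural exponents. -/
lemma integral_pow_mul_one_sub_pow (a b : ℕ) :
    ∫ x in (0:ℝ)..1, x ^ a * (1 - x) ^ b =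
      (a.factorial : ℝ) * b.factorial / (a + b + 1).factorial := by
  have h := Complex.betaIntegral_eq_Gamma_mul_div ((a:ℂ) + 1) ((b:ℂ) + 1)
    (by simp; positivity) (by simp; positivity)
  have h2 : (a:ℂ) + 1 + (b + 1) = ((a + b + 1 : ℕ) : ℂ) + 1 := by push_cast; ring
  rw [h2, Complex.Gamma_nat_eq_factorial, Complex.Gamma_nat_eq_factorial,
    Complex.Gamma_nat_eq_factorial, Complex.betaIntegral] at h
  simp only [add_sub_cancel_right, Complex.cpow_natCast] at h
  apply Complex.ofReal_injective
  rw [← intervalIntegral.integral_ofReal]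
  push_cast
  exact h

/-- Strict tangent-line inequality for the convex function `x ↦ x ^ m` on `[0, ∞)`. -/
lemma pow_tangent_lt {m : ℕ} (hm : 2 ≤ m) {g y : ℝ} (hg : 0 < g) (hy : 0 ≤ y) (hne : y ≠ g) :
    g ^ m + m * g ^ (m - 1) * (y - g) < y ^ m := by
  have h := one_add_mul_self_lt_rpow_one_add (s := y / g - 1) (p := m)
    (by have := div_nonneg hy hg.le; linarith)
    (by rw [sub_ne_zero, Ne, div_eq_one_iff_eq hg.ne']; exact hne) (by exact_mod_cast hm)
  rw [Real.rpow_natCast, add_sub_cancel, div_pow, lt_div_iff₀ (by positivity)] at h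
  obtain ⟨k, rfl⟩ : ∃ k, m = k + 1 := ⟨m - 1, by omega⟩
  refine lt_of_eq_of_lt ?_ h
  rw [Nat.add_sub_cancel]
  field_simp
  ring

/-- The value `g = G*(x)` is the critical point of the strictly convex function
`g ↦ (1 - x)^(n-1) g^m + x^(n-1) (1 - g)^m`, and it differs from `x` unless `x = 1/2`; so the
function is strictly smaller at `G*(x)` than at `x`. -/
lemma scurve_lt {n m : ℕ} (hn : 2 ≤ n) (hm : 2 ≤ m) (hnm : n ≠ m) {x g : ℝ}
    (hx0 : 0 < x) (hx1 : x < 1) (hx : x ≠ 1 / 2)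
    (hg : g = (x / (1 - x)) ^ (((n : ℝ) - 1) / ((m : ℝ) - 1)) /
        (1 + (x / (1 - x)) ^ (((n : ℝ) - 1) / ((m : ℝ) - 1)))) :
    (1 - x) ^ (n - 1) * g ^ m + x ^ (n - 1) * (1 - g) ^ m <
      (1 - x) ^ (n - 1) * x ^ m + x ^ (n - 1) * (1 - x) ^ m := by
  have hx1' : 0 < 1 - x := by linarith
  have hn' : (2:ℝ) ≤ n := by exact_mod_cast hn
  have hm' : (2:ℝ) ≤ m := by exact_mod_cast hm
  have hm1 : (m:ℝ) - 1 ≠ 0 := by linarith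
  set t := x / (1 - x) with ht
  have ht0 : 0 < t := by positivity
  have hxt : x = t * (1 - x) := by rw [ht]; field_simp
  have ht1 : t ≠ 1 := by
    intro h; rw [h] at hxt; apply hx; linarith
  set r := ((n : ℝ) - 1) / ((m : ℝ) - 1) with hr
  have hr1 : r ≠ 1 := by
    rw [hr, Ne, div_eq_one_iff_eq hm1]
    intro h; apply hnm; exact_mod_cast (by linarith : (n:ℝ) = m)
  set s := t ^ r with hs
  have hs0 : 0 < s := Real.rpow_pos_of_pos ht0 _
  have hst : s ^ (m - 1) = t ^ (n - 1) := by
    rw [hs, ← Real.rpow_natCast, ← Real.rpow_mul ht0.le, ← Real.rpow_natCast t,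
      Nat.cast_sub (by omega), Nat.cast_sub (by omega), hr]
    congr 1; push_cast; field_simp
  have hsnt : s ≠ t := by
    intro h
    apply hr1
    have h3 : t ^ r = t ^ (1:ℝ) := by rw [Real.rpow_one]; exact h
    exact (Real.rpow_right_inj ht0 ht1).1 h3
  have hg0 : 0 < g := by rw [hg]; positivity
  have h1g : 1 - g = 1 / (1 + s) := by rw [hg]; field_simp; ring
  have h1g0 : 0 < 1 - g := by rw [h1g]; positivity
  have hgs : g = s * (1 - g) := by rw [h1g, hg]; ring
  have hne : x ≠ g := by
    intro h
    apply hsnt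
    rw [← h] at hgs
    have : s * (1 - x) = t * (1 - x) := by rw [← hgs, ← hxt]
    exact mul_right_cancel₀ hx1'.ne' this
  -- The first-order condition at `g`: it makes the linear terms of the two tangent-line
  -- inequalities below cancel.
  have key : (1 - x) ^ (n - 1) * g ^ (m - 1) = x ^ (n - 1) * (1 - g) ^ (m - 1) := by
    have e1 : g ^ (m - 1) = t ^ (n - 1) * (1 - g) ^ (m - 1) := by
      rw [← hst, ← mul_pow, ← hgs]
    have e2 : x ^ (n - 1) = t ^ (n - 1) * (1 - x) ^ (n - 1) := by
      rw [← mul_pow, ← hxt]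
    rw [e1, e2]; ring
  have i1 := pow_tangent_lt hm hg0 hx0.le hne
  have i2 := pow_tangent_lt hm h1g0 hx1'.le (fun h => hne (by linarith))
  have j1 := mul_lt_mul_of_pos_left i1 (pow_pos hx1' (n - 1))
  have j2 := mul_lt_mul_of_pos_left i2 (pow_pos hx0 (n - 1))
  have : (m:ℝ) * (x - g) * ((1 - x) ^ (n - 1) * g ^ (m - 1)) =
    m * (x - g) * (x ^ (n - 1) * (1 - g) ^ (m - 1)) := by rw [key]
  nlinarith

/-- Union bound over the index attaining the minimum (resp. maximum) of the first sample. -/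
lemma prob_le {N m : ℕ} (ρ ν : Measure ℝ) [IsProbabilityMeasure ρ] [IsProbabilityMeasure ν] :
    ((Measure.pi fun _ : Fin (N + 1) => ρ).prod (Measure.pi fun _ : Fin m => ν))
      {p | (∀ i j, p.2 j < p.1 i) ∨ (∀ i j, p.1 i < p.2 j)} ≤
    (N + 1) * ∫⁻ a, (ρ (Set.Ici a) ^ N * ν (Set.Iio a) ^ m +
      ρ (Set.Iic a) ^ N * ν (Set.Ioi a) ^ m) ∂ρ := by
  set P := (Measure.pi fun _ : Fin (N + 1) => ρ).prod (Measure.pi fun _ : Fin m => ν)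
  have hge : MeasurableSet {q : ℝ × ℝ | q.1 ≤ q.2} := measurableSet_le measurable_fst measurable_snd
  have hle : MeasurableSet {q : ℝ × ℝ | q.2 ≤ q.1} := measurableSet_le measurable_snd measurable_fst
  have hgt : MeasurableSet {q : ℝ × ℝ | q.1 < q.2} := measurableSet_lt measurable_fst measurable_snd
  have hlt : MeasurableSet {q : ℝ × ℝ | q.2 < q.1} := measurableSet_lt measurable_snd measurable_fst
  have hsub : {p : (Fin (N + 1) → ℝ) × (Fin m → ℝ) |
      (∀ i j, p.2 j < p.1 i) ∨ (∀ i j, p.1 i < p.2 j)} ⊆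
      ⋃ k : Fin (N + 1),
        ({p | (∀ i : Fin N, (p.1 k, p.1 (k.succAbove i)) ∈ {q : ℝ × ℝ | q.1 ≤ q.2}) ∧
          ∀ j, (p.1 k, p.2 j) ∈ {q : ℝ × ℝ | q.2 < q.1}} ∪
        {p | (∀ i : Fin N, (p.1 k, p.1 (k.succAbove i)) ∈ {q : ℝ × ℝ | q.2 ≤ q.1}) ∧
          ∀ j, (p.1 k, p.2 j) ∈ {q : ℝ × ℝ | q.1 < q.2}}) := by
    rintro p (h | h)
    · obtain ⟨k, hk⟩ := Finite.exists_min p.1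
      exact Set.mem_iUnion.2 ⟨k, Or.inl ⟨fun i => hk _, fun j => h k j⟩⟩
    · obtain ⟨k, hk⟩ := Finite.exists_max p.1
      exact Set.mem_iUnion.2 ⟨k, Or.inr ⟨fun i => hk _, fun j => h k j⟩⟩
  refine (measure_mono hsub).trans ((measure_iUnion_fintype_le _ _).trans ?_)
  refine (Finset.sum_le_sum fun k _ => measure_union_le _ _).trans ?_
  simp only [P, prob_slice ρ ν _ hge hlt, prob_slice ρ ν _ hle hgt]
  rw [lintegral_add_left]
  · simp only [Finset.sum_const, Finset.card_univ, Fintype.card_fin, nsmul_eq_mul]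
    push_cast
    exact le_rfl
  · exact ((measurable_measure_prodMk_left (ν := ρ) hge).pow_const N).mul
      ((measurable_measure_prodMk_left (ν := ν) hlt).pow_const m)

/-- Theorem 2 of the paper in probabilistic form: for `n ≠ m`, if the second sample has the
S-curve distribution `G*`, then the probability that the two-sample Kolmogorov–Smirnov
statistic equals 1 is strictly less than its null value `2·n!·m!/(n+m)!`. -/
theorem ks_biased_smallest_level_prob (n m : ℕ) (hn : 2 ≤ n) (hm : 2 ≤ m) (hnm : n ≠ m)
    (ν : Measure ℝ) [IsProbabilityMeasure ν] (hν : ν (Set.Icc (0:ℝ) 1) = 1)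
    (hcdf : ∀ x ∈ Set.Ioo (0:ℝ) 1, (ν (Set.Iic x)).toReal =
      (x / (1 - x)) ^ (((n : ℝ) - 1) / ((m : ℝ) - 1)) /
        (1 + (x / (1 - x)) ^ (((n : ℝ) - 1) / ((m : ℝ) - 1)))) :
    (((Measure.pi fun _ : Fin n => volume.restrict (Set.Icc (0:ℝ) 1)).prod
        (Measure.pi fun _ : Fin m => ν))
      {p : (Fin n → ℝ) × (Fin m → ℝ) |
        (∀ (i : Fin n) (j : Fin m), p.2 j < p.1 i) ∨
        (∀ (i : Fin n) (j : Fin m), p.1 i < p.2 j)}).toReal <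
    2 * (n.factorial : ℝ) * m.factorial / (n + m).factorial := by
  obtain ⟨N, rfl⟩ : ∃ N, n = N + 1 := ⟨n - 1, by omega⟩
  set ρ : Measure ℝ := volume.restrict (Set.Icc (0:ℝ) 1) with hρ
  have : IsProbabilityMeasure ρ := ⟨by simp [hρ]⟩
  -- The distribution function of `ν` is prescribed on the open interval only.
  have hρ' : ρ = volume.restrict (Set.Ioo (0:ℝ) 1) :=
    Measure.restrict_congr_set Ioo_ae_eq_Icc.symm
  have hIci : ∀ a ∈ Set.Ioo (0:ℝ) 1, ρ (Set.Ici a) = ENNReal.ofReal (1 - a) := fun a ha => by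
    rw [hρ, Measure.restrict_apply measurableSet_Ici]
    have : Set.Ici a ∩ Set.Icc 0 1 = Set.Icc a 1 := by
      ext y; simp only [Set.mem_inter_iff, Set.mem_Ici, Set.mem_Icc]
      exact ⟨fun h => ⟨h.1, h.2.2⟩, fun h => ⟨h.1, ha.1.le.trans h.1, h.2⟩⟩
    rw [this, Real.volume_Icc]
  have hIic : ∀ a ∈ Set.Ioo (0:ℝ) 1, ρ (Set.Iic a) = ENNReal.ofReal a := fun a ha => by
    rw [hρ, Measure.restrict_apply measurableSet_Iic]
    have : Set.Iic a ∩ Set.Icc 0 1 = Set.Icc 0 a := by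
      ext y; simp only [Set.mem_inter_iff, Set.mem_Iic, Set.mem_Icc]
      exact ⟨fun h => ⟨h.2.1, h.1⟩, fun h => ⟨h.2, h.1, h.2.trans ha.2.le⟩⟩
    rw [this, Real.volume_Icc, sub_zero]
  set k : ℝ → ℝ := fun a => (1 - a) ^ N * a ^ m + a ^ N * (1 - a) ^ m with hk
  have hkc : Continuous k := by fun_prop
  have hae : ∀ᵐ a ∂ρ, ρ (Set.Ici a) ^ N * ν (Set.Iio a) ^ m +
      ρ (Set.Iic a) ^ N * ν (Set.Ioi a) ^ m < ENNReal.ofReal (k a) := by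
    have hhalf : ∀ᵐ a ∂ρ, a ≠ 1 / 2 := by
      rw [hρ]; exact ae_restrict_of_ae (Measure.ae_ne volume _)
    have hIoo : ∀ᵐ a ∂ρ, a ∈ Set.Ioo (0:ℝ) 1 := by
      rw [hρ']; exact ae_restrict_mem measurableSet_Ioo
    filter_upwards [hhalf, hIoo] with a ha ha01
    set g : ℝ := (ν (Set.Iic a)).toReal with hg
    have hlt := scurve_lt hn hm hnm ha01.1 ha01.2 ha (hcdf a ha01)
    rw [Nat.add_sub_cancel] at hlt
    have h1a : 0 ≤ 1 - a := sub_nonneg.2 ha01.2.le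
    have h1 : ν (Set.Iio a) ≤ ENNReal.ofReal g := by
      rw [hg, ENNReal.ofReal_toReal (measure_ne_top _ _)]
      exact measure_mono Set.Iio_subset_Iic_self
    have h2 : ν (Set.Ioi a) = ENNReal.ofReal (1 - g) := by
      rw [← Set.compl_Iic, prob_compl_eq_one_sub measurableSet_Iic,
        ENNReal.ofReal_sub _ ENNReal.toReal_nonneg, ENNReal.ofReal_one,
        ENNReal.ofReal_toReal (measure_ne_top _ _)]
    have hg0 : 0 ≤ g := ENNReal.toReal_nonneg
    have hg1 : 0 ≤ 1 - g := by
      have : g ≤ 1 := measureReal_le_one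
      linarith
    have ha0 := ha01.1.le
    refine lt_of_le_of_lt ?_ ((ENNReal.ofReal_lt_ofReal_iff_of_nonneg (by positivity)).2 hlt)
    rw [ENNReal.ofReal_add (by positivity) (by positivity), ENNReal.ofReal_mul (by positivity),
      ENNReal.ofReal_mul (by positivity), ENNReal.ofReal_pow h1a, ENNReal.ofReal_pow hg0,
      ENNReal.ofReal_pow ha0, ENNReal.ofReal_pow hg1, hIci a ha01, hIic a ha01, h2]
    gcongr
  have hint : ∫ a, k a ∂ρ = 2 * ((N.factorial : ℝ) * m.factorial / (N + m + 1).factorial) := by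
    rw [hρ, integral_Icc_eq_integral_Ioc, ← intervalIntegral.integral_of_le zero_le_one, hk,
      intervalIntegral.integral_add (Continuous.intervalIntegrable (by fun_prop) _ _)
        (Continuous.intervalIntegrable (by fun_prop) _ _), integral_pow_mul_one_sub_pow]
    simp_rw [mul_comm _ (_ ^ m)]
    rw [integral_pow_mul_one_sub_pow, add_comm m N]
    ring
  have hkint : Integrable k ρ := hkc.continuousOn.integrableOn_compact isCompact_Icc
  have hk0 : 0 ≤ᵐ[ρ] k := by
    filter_upwards [ae_restrict_mem measurableSet_Icc] with a ha
    have h0 := ha.1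
    have h1 : 0 ≤ 1 - a := sub_nonneg.2 ha.2
    simp only [hk, Pi.zero_apply]
    positivity
  have hkl : ∫⁻ a, ENNReal.ofReal (k a) ∂ρ = ENNReal.ofReal (∫ a, k a ∂ρ) :=
    (ofReal_integral_eq_lintegral_ofReal hkint hk0).symm
  have hstrict := lintegral_strict_mono (IsProbabilityMeasure.ne_zero ρ)
    (hkc.measurable.ennreal_ofReal.aemeasurable)
    (ne_top_of_le_ne_top (hkl ▸ ENNReal.ofReal_ne_top)
      (lintegral_mono_ae (hae.mono fun _ h => h.le)))
    hae
  have hfin : (((Measure.pi fun _ : Fin (N + 1) => ρ).prod (Measure.pi fun _ : Fin m => ν))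
      {p | (∀ i j, p.2 j < p.1 i) ∨ (∀ i j, p.1 i < p.2 j)}) <
      ENNReal.ofReal (((N:ℝ) + 1) * ∫ a, k a ∂ρ) := by
    refine (prob_le ρ ν).trans_lt ?_
    rw [ENNReal.ofReal_mul (by positivity), ← hkl,
      show ENNReal.ofReal ((N:ℝ) + 1) = (N:ENNReal) + 1 by
        rw [ENNReal.ofReal_add (by positivity) zero_le_one]; simp]
    exact ENNReal.mul_lt_mul_right (by simp) (by finiteness) hstrict
  refine ((ENNReal.lt_ofReal_iff_toReal_lt (measure_ne_top _ _)).1 hfin).trans_eq ?_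
  rw [hint, Nat.factorial_succ N, show N + 1 + m = N + m + 1 by ring]
  push_cast
  ring
end

section
/- Let n ≥ 4 and m ≥ 2 be integers and fix x ∈ (0,1). The function g(y) = x^{n−2}(1−x)(1−y)^m + x(1−x)^{n−2} y^m on [0,1] attains its minimum at a unique point y* ∈ (0,1), namely y* = s/(1+s) where s = (x/(1−x))^{(n−3)/(m−1)}; equivalently, y* is the unique y ∈ (0,1) satisfying (y/(1−y))^{m−1} = (x/(1−x))^{n−3}. -/
/-!
The function `g(y) = A (1 - y)^m + B y^m` is strictly convex on `[0,1]`, so a critical point is its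
unique minimiser. Since `A / B = (x / (1 - x))^(n - 3)`, the critical point equation
`A (1 - y)^(m - 1) = B y^(m - 1)` says that the odds `y / (1 - y)` have `(m - 1)`-st power
`(x / (1 - x))^(n - 3)`, which `y* = s / (1 + s)`, having odds `s`, satisfies. Strict convexity is
used through the tangent line inequality `pow_tangent_lt`, applied to `y ↦ y^m` at `y*` and to
`z ↦ z^m` at `1 - y*`: the linear terms cancel at a critical point.
-/

/-- The graph of `a ↦ a ^ (k + 2)` on `[0, ∞)` lies strictly above its tangent line at `b > 0`,
except at `b`. -/
lemma pow_tangent_lt_s10 (k : ℕ) {a b : ℝ} (ha : 0 ≤ a) (hb : 0 < b) (hab : a ≠ b) :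
    b ^ (k + 2) + (k + 2) * b ^ (k + 1) * (a - b) < a ^ (k + 2) := by
  have hsq : 0 < (a - b) ^ 2 := by
    have := sub_ne_zero.mpr hab
    positivity
  induction k with
  | zero => norm_num; nlinarith
  | succ k ih =>
    have h1 := mul_le_mul_of_nonneg_left ih.le ha
    have h2 : 0 < (k + 2) * b ^ (k + 1) * (a - b) ^ 2 := by positivity
    push_cast
    -- `a` times the tangent line for `k` exceeds the one for `k + 1` by the quantity in `h2`.
    calc b ^ (k + 1 + 2) + ((k : ℝ) + 1 + 2) * b ^ (k + 1 + 1) * (a - b)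
        = a * (b ^ (k + 2) + (k + 2) * b ^ (k + 1) * (a - b))
          - (k + 2) * b ^ (k + 1) * (a - b) ^ 2 := by ring
      _ < a * a ^ (k + 2) := by linarith
      _ = a ^ (k + 1 + 2) := by ring

/-- For `n ≥ 4`, `m ≥ 2` and `x ∈ (0,1)`, the function
`g(y) = x^{n−2}(1−x)(1−y)^m + x(1−x)^{n−2} y^m` on `[0,1]` attains its minimum at the unique
point `y* = s/(1+s)` with `s = (x/(1−x))^{(n−3)/(m−1)}`; equivalently `y*` is the unique
`y ∈ (0,1)` with `(y/(1−y))^{m−1} = (x/(1−x))^{n−3}`. -/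
theorem ks_pointwise_min_second_level (n m : ℕ) (hn : 4 ≤ n) (hm : 2 ≤ m)
    (x : ℝ) (hx : x ∈ Set.Ioo (0:ℝ) 1) :
    let g : ℝ → ℝ := fun y => x ^ (n - 2) * (1 - x) * (1 - y) ^ m + x * (1 - x) ^ (n - 2) * y ^ m
    let s : ℝ := (x / (1 - x)) ^ (((n : ℝ) - 3) / ((m : ℝ) - 1))
    let ystar : ℝ := s / (1 + s)
    ystar ∈ Set.Ioo (0:ℝ) 1 ∧
    (∀ y ∈ Set.Icc (0:ℝ) 1, g ystar ≤ g y) ∧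
    (∀ y ∈ Set.Icc (0:ℝ) 1, y ≠ ystar → g ystar < g y) ∧
    (ystar / (1 - ystar)) ^ (m - 1) = (x / (1 - x)) ^ (n - 3) ∧
    (∀ y ∈ Set.Ioo (0:ℝ) 1,
      (y / (1 - y)) ^ (m - 1) = (x / (1 - x)) ^ (n - 3) → y = ystar) := by
  intro g s ystar
  obtain ⟨hx0, hx1⟩ := hx
  obtain ⟨k, rfl⟩ : ∃ k, m = k + 2 := ⟨m - 2, by omega⟩
  obtain ⟨j, rfl⟩ : ∃ j, n = j + 4 := ⟨n - 4, by omega⟩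
  have hx2 : 0 < 1 - x := by linarith
  have hr : 0 < x / (1 - x) := by positivity
  have hs : 0 < s := Real.rpow_pos_of_pos hr _
  have hy0 : 0 < ystar := by positivity
  have hy1 : 1 - ystar = 1 / (1 + s) := by
    simp only [ystar]
    field_simp
    ring
  have hy2 : 0 < 1 - ystar := by rw [hy1]; positivity
  have hodds : ystar / (1 - ystar) = s := by
    rw [hy1]
    simp only [ystar]
    field_simp
  have hspow : s ^ (k + 1) = (x / (1 - x)) ^ (j + 1) := by
    simp only [s]
    rw [← Real.rpow_natCast, ← Real.rpow_mul hr.le, ← Real.rpow_natCast]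
    congr 1
    push_cast
    have : (k : ℝ) + 2 - 1 ≠ 0 := by
      have : (0 : ℝ) ≤ k := k.cast_nonneg
      linarith
    field_simp
    ring
  -- The derivative of `g` vanishes at `y*`.
  have hcrit : x ^ (j + 2) * (1 - x) * (1 - ystar) ^ (k + 1)
      = x * (1 - x) ^ (j + 2) * ystar ^ (k + 1) := by
    have h := hspow
    rw [← hodds, div_pow ystar, div_pow x, div_eq_div_iff (by positivity) (by positivity)] at h
    linear_combination (-(x * (1 - x))) * h
  have hlt : ∀ y ∈ Set.Icc (0:ℝ) 1, y ≠ ystar → g ystar < g y := by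
    rintro y ⟨h0, h1⟩ hne
    have hA : 0 < x ^ (j + 2) * (1 - x) := by positivity
    have hB : 0 < x * (1 - x) ^ (j + 2) := by positivity
    have t1 := mul_lt_mul_of_pos_left (pow_tangent_lt_s10 k h0 hy0 hne) hB
    have t2 := mul_lt_mul_of_pos_left
      (pow_tangent_lt_s10 k (sub_nonneg.mpr h1) hy2 (fun h => hne (by linarith))) hA
    change x ^ (j + 2) * (1 - x) * (1 - ystar) ^ (k + 2) + x * (1 - x) ^ (j + 2) * ystar ^ (k + 2)
      < x ^ (j + 2) * (1 - x) * (1 - y) ^ (k + 2) + x * (1 - x) ^ (j + 2) * y ^ (k + 2)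
    linear_combination t1 + t2 + (k + 2) * (y - ystar) * hcrit
  refine ⟨⟨hy0, by linarith⟩, fun y hy => ?_, hlt, ?_, ?_⟩
  · rcases eq_or_ne y ystar with rfl | hne
    · exact le_rfl
    · exact (hlt y hy hne).le
  · rw [hodds]
    exact hspow
  · rintro y ⟨h0, h1⟩ h
    have h2 : 0 < 1 - y := by linarith
    have hys : y / (1 - y) = s :=
      (pow_left_inj₀ (by positivity) hs.le k.succ_ne_zero).mp (h.trans hspow.symm)
    have : y = s * (1 - y) := (div_eq_iff h2.ne').mp hys
    simp only [ystar]
    rw [eq_div_iff (by positivity)]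
    linarith
end

section
/- Let n ≥ 2 and m ≥ 4 be integers and fix x ∈ (0,1). The function h(y) = m·((1−x)^{n−1} y^{m−1}(1−y) + x^{n−1} y (1−y)^{m−1}) + (1−x)^{n−1} y^m + x^{n−1} (1−y)^m on [0,1] has derivative h'(y) = m(m−1)·((1−x)^{n−1} y^{m−2}(1−y) − x^{n−1} y (1−y)^{m−2}), and h attains its minimum at a unique point y* ∈ (0,1), namely the unique y ∈ (0,1) satisfying (y/(1−y))^{m−3} = (x/(1−x))^{n−1}, i.e. y* = u/(1+u) with u = (x/(1−x))^{(n−1)/(m−3)}. -/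
/-!
Write `a = (1-x)^(n-1)`, `b = x^(n-1)` and `m = k + 4`. The derivative factors as
`h'(y) = m(m-1) · y(1-y) · (a y^(k+1) - b (1-y)^(k+1))`.
On `[0,1]` the last factor is strictly increasing, and it vanishes at `y*`, because
`y*/(1-y*) = u` and `u^(k+1) = b/a`. So `h` strictly decreases on `[0,y*]` and strictly increases
on `[y*,1]` (`ksFun_lt`). Uniqueness of the root of `(y/(1-y))^(m-3) = (x/(1-x))^(n-1)` is
injectivity of `t ↦ t^(m-3)` on the nonnegative reals.
-/

/-- The function `h` for `m = k + 4`, with the weights `(1-x)^(n-1)` and `x^(n-1)` replaced by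
arbitrary reals `a` and `b`. -/
def ksFun (a b : ℝ) (k : ℕ) (y : ℝ) : ℝ :=
  ((k + 4 : ℕ) : ℝ) * (a * y ^ (k + 3) * (1 - y) + b * y * (1 - y) ^ (k + 3)) +
    a * y ^ (k + 4) + b * (1 - y) ^ (k + 4)

theorem hasDerivAt_ksFun (a b : ℝ) (k : ℕ) (y : ℝ) :
    HasDerivAt (ksFun a b k)
      (((k + 4 : ℕ) : ℝ) * (((k + 4 : ℕ) : ℝ) - 1) *
        (a * y ^ (k + 2) * (1 - y) - b * y * (1 - y) ^ (k + 2))) y := by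
  have h1 : HasDerivAt (fun y : ℝ => 1 - y) (-1) y := by
    simpa using (hasDerivAt_id y).const_sub 1
  have hp (i : ℕ) := hasDerivAt_pow i y
  have hq (i : ℕ) := h1.pow i
  have key := (((((hp (k + 3)).const_mul a).mul h1).add
    (((hasDerivAt_id y).const_mul b).mul (hq (k + 3)))).const_mul ((k + 4 : ℕ) : ℝ)).add
      ((hp (k + 4)).const_mul a) |>.add ((hq (k + 4)).const_mul b)
  refine key.congr_deriv ?_
  simp only [id, Pi.pow_apply, show k + 3 - 1 = k + 2 by omega,
    show k + 4 - 1 = k + 3 by omega]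
  push_cast
  ring

/-- If the nontrivial factor of the derivative vanishes at `s ∈ (0,1)`, then `s` is the strict
global minimizer on `[0,1]`. -/
theorem ksFun_lt {a b : ℝ} (ha : 0 < a) (hb : 0 < b) (k : ℕ) {s : ℝ} (hs0 : 0 < s) (hs1 : s < 1)
    (hs : a * s ^ (k + 1) = b * (1 - s) ^ (k + 1)) {y : ℝ} (hy : y ∈ Set.Icc (0 : ℝ) 1)
    (hne : y ≠ s) : ksFun a b k s < ksFun a b k y := by
  have hcont : Continuous (ksFun a b k) :=
    continuous_iff_continuousAt.2 fun z => (hasDerivAt_ksFun a b k z).continuousAt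
  have hfac (z : ℝ) : deriv (ksFun a b k) z = ((k + 4 : ℕ) : ℝ) * (((k + 4 : ℕ) : ℝ) - 1) *
      (z * (1 - z)) * (a * z ^ (k + 1) - b * (1 - z) ^ (k + 1)) := by
    rw [(hasDerivAt_ksFun a b k z).deriv]
    ring
  have hc : 0 < ((k + 4 : ℕ) : ℝ) * (((k + 4 : ℕ) : ℝ) - 1) := by
    push_cast
    have : (0 : ℝ) ≤ k := k.cast_nonneg
    exact mul_pos (by linarith) (by linarith)
  rcases lt_or_gt_of_ne hne with hlt | hgt
  · have hanti : StrictAntiOn (ksFun a b k) (Set.Icc 0 s) := by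
      refine strictAntiOn_of_deriv_neg (convex_Icc 0 s) hcont.continuousOn fun z hz => ?_
      rw [interior_Icc] at hz
      obtain ⟨hz0, hzs⟩ := hz
      have e1 : a * z ^ (k + 1) < a * s ^ (k + 1) := by gcongr
      have e2 : b * (1 - s) ^ (k + 1) < b * (1 - z) ^ (k + 1) := by
        have : 0 ≤ 1 - s := by linarith
        gcongr
      rw [hfac]
      exact mul_neg_of_pos_of_neg (mul_pos hc (mul_pos hz0 (by linarith))) (by linarith)
    exact hanti ⟨hy.1, hlt.le⟩ ⟨hs0.le, le_rfl⟩ hlt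
  · have hmono : StrictMonoOn (ksFun a b k) (Set.Icc s 1) := by
      refine strictMonoOn_of_deriv_pos (convex_Icc s 1) hcont.continuousOn fun z hz => ?_
      rw [interior_Icc] at hz
      obtain ⟨hzs, hz1⟩ := hz
      have e1 : a * s ^ (k + 1) < a * z ^ (k + 1) := by gcongr
      have e2 : b * (1 - z) ^ (k + 1) < b * (1 - s) ^ (k + 1) := by
        have : 0 ≤ 1 - z := by linarith
        gcongr
      rw [hfac]
      exact mul_pos (mul_pos hc (mul_pos (by linarith) (by linarith))) (by linarith)
    exact hmono ⟨le_rfl, hs1.le⟩ ⟨hgt.le, hy.2⟩ hgt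

/-- For `n ≥ 2`, `m ≥ 4` and `x ∈ (0,1)`, the function
`h(y) = m((1−x)^{n−1} y^{m−1}(1−y) + x^{n−1} y(1−y)^{m−1}) + (1−x)^{n−1} y^m + x^{n−1}(1−y)^m`
has derivative `h'(y) = m(m−1)((1−x)^{n−1} y^{m−2}(1−y) − x^{n−1} y (1−y)^{m−2})` and attains
its minimum on `[0,1]` at the unique point `y* = u/(1+u)`, `u = (x/(1−x))^{(n−1)/(m−3)}`,
the unique `y ∈ (0,1)` with `(y/(1−y))^{m−3} = (x/(1−x))^{n−1}`. -/
theorem ks_pointwise_min_second_level' (n m : ℕ) (hn : 2 ≤ n) (hm : 4 ≤ m)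
    (x : ℝ) (hx : x ∈ Set.Ioo (0:ℝ) 1) :
    let h : ℝ → ℝ := fun y =>
      m * ((1 - x) ^ (n - 1) * y ^ (m - 1) * (1 - y) + x ^ (n - 1) * y * (1 - y) ^ (m - 1)) +
        (1 - x) ^ (n - 1) * y ^ m + x ^ (n - 1) * (1 - y) ^ m
    let u : ℝ := (x / (1 - x)) ^ (((n : ℝ) - 1) / ((m : ℝ) - 3))
    let ystar : ℝ := u / (1 + u)
    (∀ y : ℝ, HasDerivAt h
      (m * (m - 1) *
        ((1 - x) ^ (n - 1) * y ^ (m - 2) * (1 - y) - x ^ (n - 1) * y * (1 - y) ^ (m - 2))) y) ∧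
    ystar ∈ Set.Ioo (0:ℝ) 1 ∧
    (∀ y ∈ Set.Icc (0:ℝ) 1, h ystar ≤ h y) ∧
    (∀ y ∈ Set.Icc (0:ℝ) 1, y ≠ ystar → h ystar < h y) ∧
    (ystar / (1 - ystar)) ^ (m - 3) = (x / (1 - x)) ^ (n - 1) ∧
    (∀ y ∈ Set.Ioo (0:ℝ) 1,
      (y / (1 - y)) ^ (m - 3) = (x / (1 - x)) ^ (n - 1) → y = ystar) := by
  intro h u ystar
  obtain ⟨k, rfl⟩ : ∃ k, m = k + 4 := ⟨m - 4, by omega⟩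
  obtain ⟨hx0, hx1⟩ := hx
  have hx1' : 0 < 1 - x := by linarith
  have hr : 0 < x / (1 - x) := div_pos hx0 hx1'
  have hu : 0 < u := Real.rpow_pos_of_pos hr _
  have hy0 : 0 < ystar := by positivity
  have hy1 : ystar < 1 := by
    rw [div_lt_one (by linarith)]
    linarith
  have hodds : ystar / (1 - ystar) = u := by
    have : 1 - ystar = 1 / (1 + u) := by
      simp only [ystar]
      field_simp
      ring
    rw [this]
    simp only [ystar]
    field_simp
  have hupow : u ^ (k + 1) = (x / (1 - x)) ^ (n - 1) := by
    rw [← Real.rpow_natCast u, ← Real.rpow_mul hr.le, ← Real.rpow_natCast _ (n - 1)]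
    congr 1
    have hk : (0 : ℝ) < (k : ℝ) + 1 := by positivity
    rw [Nat.cast_sub (by omega : 1 ≤ n)]
    push_cast
    rw [show (k : ℝ) + 4 - 3 = k + 1 by ring]
    field_simp
  have heq : (ystar / (1 - ystar)) ^ (k + 1) = (x / (1 - x)) ^ (n - 1) := by rw [hodds, hupow]
  have hcrit : (1 - x) ^ (n - 1) * ystar ^ (k + 1) = x ^ (n - 1) * (1 - ystar) ^ (k + 1) := by
    have h2 : 0 < 1 - ystar := by linarith
    rw [div_pow ystar, div_pow x, div_eq_div_iff (by positivity) (by positivity)] at heq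
    linarith
  have hlt : ∀ y ∈ Set.Icc (0:ℝ) 1, y ≠ ystar → h ystar < h y := fun y hy hne =>
    ksFun_lt (by positivity) (by positivity) k hy0 hy1 hcrit hy hne
  refine ⟨fun y => hasDerivAt_ksFun _ _ k y, ⟨hy0, hy1⟩, fun y hy => ?_, hlt, heq, ?_⟩
  · rcases eq_or_ne y ystar with rfl | hne
    · exact le_rfl
    · exact (hlt y hy hne).le
  · intro y hy hyeq
    have h1 : 0 < 1 - y := by linarith [hy.2]
    have h2 : y / (1 - y) = ystar / (1 - ystar) :=
      (pow_left_inj₀ (div_pos hy.1 h1).le (hodds ▸ hu.le) (by omega : k + 4 - 3 ≠ 0)).1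
        (hyeq.trans heq.symm)
    rw [div_eq_div_iff h1.ne' (by linarith)] at h2
    linarith
end

section
/- Let m ≥ 2 be an integer. For every measurable function G : [0,1] → [0,1], ∫₀¹ (x^m (1−x)(1−G(x))^m + x (1−x)^m G(x)^m) dx ≥ ∫₀¹ (x^m (1−x)^{m+1} + x^{m+1} (1−x)^m) dx, with equality if and only if G(x) = x for Lebesgue-almost every x ∈ [0,1]. -/
/-!
The inequality holds pointwise. For fixed `x ∈ (0,1)` the integrand
`g ↦ x^m (1-x) (1-g)^m + x (1-x)^m g^m` is strictly convex on `[0,1]`, and its derivative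
`m (x (1-x)^m g^(m-1) - x^m (1-x) (1-g)^(m-1))` vanishes at `g = x`, so `g = x` is its unique
minimizer. Strict convexity is used through the strict tangent-line inequality
`tangent_lt_pow`, applied to the two powers: the linear terms cancel (`integrand_lt`).
Integrating gives the inequality; equality of the integrals forces a.e. equality of the
integrands, hence `G x = x` almost everywhere.
-/

open MeasureTheory

/-- The graph of `t ↦ t ^ (k + 2)` on `[0, ∞)` lies strictly above its tangent at `a > 0`,
away from `a`. -/
lemma tangent_lt_pow (k : ℕ) {a b : ℝ} (ha : 0 < a) (hb : 0 ≤ b) (hab : b ≠ a) :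
    a ^ (k + 2) + (k + 2) * a ^ (k + 1) * (b - a) < b ^ (k + 2) := by
  have hsq : 0 < (b - a) ^ 2 := by
    have : b - a ≠ 0 := sub_ne_zero.mpr hab
    positivity
  induction k with
  | zero => norm_num; nlinarith
  | succ k ih =>
    have h1 := mul_le_mul_of_nonneg_left ih.le hb
    have h2 : 0 < ((k : ℝ) + 2) * a ^ (k + 1) * (b - a) ^ 2 := by positivity
    push_cast
    calc a ^ (k + 1 + 2) + ((k : ℝ) + 1 + 2) * a ^ (k + 1 + 1) * (b - a)
        = b * (a ^ (k + 2) + (k + 2) * a ^ (k + 1) * (b - a))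
            - ((k : ℝ) + 2) * a ^ (k + 1) * (b - a) ^ 2 := by ring
      _ < b * b ^ (k + 2) := by linarith
      _ = b ^ (k + 1 + 2) := by ring

lemma integrand_lt {m : ℕ} (hm : 2 ≤ m) {x g : ℝ} (hx0 : 0 < x) (hx1 : x < 1)
    (hg0 : 0 ≤ g) (hg1 : g ≤ 1) (hgx : g ≠ x) :
    x ^ m * (1 - x) ^ (m + 1) + x ^ (m + 1) * (1 - x) ^ m <
      x ^ m * (1 - x) * (1 - g) ^ m + x * (1 - x) ^ m * g ^ m := by
  obtain ⟨k, rfl⟩ := Nat.exists_eq_add_of_le' hm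
  have hy : 0 < 1 - x := by linarith
  have h1 := tangent_lt_pow k hx0 hg0 hgx
  have h2 := tangent_lt_pow k hy (b := 1 - g) (by linarith) (fun h => hgx (by linarith))
  have h3 := mul_lt_mul_of_pos_left h1 (show 0 < x * (1 - x) ^ (k + 2) by positivity)
  have h4 := mul_lt_mul_of_pos_left h2 (show 0 < x ^ (k + 2) * (1 - x) by positivity)
  refine lt_of_eq_of_lt ?_ (add_lt_add h4 h3)
  ring

/-- Unbiasedness half of Theorem 3 for `n = m + 2`: for every measurable `G : [0,1] → [0,1]`,
`∫₀¹ (x^m (1−x)(1−G(x))^m + x (1−x)^m G(x)^m) dx ≥ ∫₀¹ (x^m (1−x)^{m+1} + x^{m+1} (1−x)^m) dx`,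
with equality iff `G(x) = x` for a.e. `x ∈ [0,1]`. -/
theorem ks_unbiased_n_eq_m_add_two (m : ℕ) (hm : 2 ≤ m)
    (G : ℝ → ℝ) (hGmeas : Measurable G)
    (hG : ∀ x ∈ Set.Icc (0:ℝ) 1, G x ∈ Set.Icc (0:ℝ) 1) :
    (∫ x in Set.Icc (0:ℝ) 1,
        (x ^ m * (1 - x) * (1 - G x) ^ m + x * (1 - x) ^ m * (G x) ^ m) ≥
      ∫ x in Set.Icc (0:ℝ) 1, (x ^ m * (1 - x) ^ (m + 1) + x ^ (m + 1) * (1 - x) ^ m)) ∧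
    ((∫ x in Set.Icc (0:ℝ) 1,
        (x ^ m * (1 - x) * (1 - G x) ^ m + x * (1 - x) ^ m * (G x) ^ m) =
      ∫ x in Set.Icc (0:ℝ) 1, (x ^ m * (1 - x) ^ (m + 1) + x ^ (m + 1) * (1 - x) ^ m)) ↔
      (∀ᵐ x ∂(volume.restrict (Set.Icc (0:ℝ) 1)), G x = x)) := by
  have hI : Integrable (fun x => x ^ m * (1 - x) ^ (m + 1) + x ^ (m + 1) * (1 - x) ^ m)
      (volume.restrict (Set.Icc (0:ℝ) 1)) :=
    (Continuous.continuousOn (by fun_prop)).integrableOn_Icc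
  have hJ : Integrable
      (fun x => x ^ m * (1 - x) * (1 - G x) ^ m + x * (1 - x) ^ m * (G x) ^ m)
      (volume.restrict (Set.Icc (0:ℝ) 1)) := by
    refine Integrable.of_bound (by fun_prop) 2 ?_
    filter_upwards [ae_restrict_mem measurableSet_Icc] with x hx
    obtain ⟨h0, h1⟩ := hG x hx
    obtain ⟨hx0, hx1⟩ := hx
    have hy : 0 ≤ 1 - x := by linarith
    have hg : 0 ≤ 1 - G x := by linarith
    rw [Real.norm_of_nonneg (by positivity)]
    have a1 : x ^ m * (1 - x) * (1 - G x) ^ m ≤ 1 :=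
      mul_le_one₀ (mul_le_one₀ (pow_le_one₀ hx0 hx1) hy (by linarith)) (by positivity)
        (pow_le_one₀ hg (by linarith))
    have a2 : x * (1 - x) ^ m * (G x) ^ m ≤ 1 :=
      mul_le_one₀ (mul_le_one₀ hx1 (by positivity) (pow_le_one₀ hy (by linarith)))
        (by positivity) (pow_le_one₀ h0 h1)
    linarith
  have hIoo : ∀ᵐ x ∂(volume.restrict (Set.Icc (0:ℝ) 1)), x ∈ Set.Ioo (0:ℝ) 1 := by
    rw [← restrict_Ioo_eq_restrict_Icc]
    exact ae_restrict_mem measurableSet_Ioo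
  have hle : (fun x => x ^ m * (1 - x) ^ (m + 1) + x ^ (m + 1) * (1 - x) ^ m)
      ≤ᵐ[volume.restrict (Set.Icc (0:ℝ) 1)]
      (fun x => x ^ m * (1 - x) * (1 - G x) ^ m + x * (1 - x) ^ m * (G x) ^ m) := by
    filter_upwards [hIoo] with x hx
    obtain ⟨h0, h1⟩ := hG x (Set.Ioo_subset_Icc_self hx)
    by_cases h : G x = x
    · rw [h]
      exact le_of_eq (by ring)
    · exact (integrand_lt hm hx.1 hx.2 h0 h1 h).le
  refine ⟨integral_mono_ae hI hJ hle, ?_⟩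
  rw [eq_comm, integral_eq_iff_of_ae_le hI hJ hle]
  constructor
  · intro h
    filter_upwards [h, hIoo] with x hx hx'
    obtain ⟨h0, h1⟩ := hG x (Set.Ioo_subset_Icc_self hx')
    by_contra hne
    exact (integrand_lt hm hx'.1 hx'.2 h0 h1 hne).ne hx
  · intro h
    filter_upwards [h] with x hx
    rw [hx]
    ring
end

section
/- Let n ≥ 2 be an integer and set m = n + 2. For every measurable function G : [0,1] → [0,1], ∫₀¹ h_x(G(x)) dx ≥ ∫₀¹ h_x(x) dx, where h_x(y) = m·((1−x)^{n−1} y^{m−1}(1−y) + x^{n−1} y (1−y)^{m−1}) + (1−x)^{n−1} y^m + x^{n−1} (1−y)^m, with equality if and only if G(x) = x for Lebesgue-almost every x ∈ [0,1]. -/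
/-!
The inequality holds pointwise in `x`. Differentiating in `y`, most terms cancel and, for
`n = k + 1`, `m = k + 3`,
`∂h_x/∂y = m (m - 1) y (1 - y) (((1 - x) y) ^ k - (x (1 - y)) ^ k)`.
The exponents `n - 1` and `m - 3` agree exactly because `m = n + 2`, so the sign of the derivative on
`(0, 1)` is that of `(1 - x) y - x (1 - y) = y - x`. Hence `y = x` is the unique minimizer of `h_x` on
`[0, 1]` (`ksH_lt`). Integrating, the difference `h_x(G x) - h_x(x)` is nonnegative and its integral
vanishes iff it vanishes almost everywhere, that is, iff `G x = x` almost everywhere.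
-/

open MeasureTheory

/-- The integrand `h_x(y)` of the theorem with `n = k + 1` and `m = k + 3`, which removes the
truncated subtractions from the exponents. -/
noncomputable def ksH (k : ℕ) (x y : ℝ) : ℝ :=
  ((k + 3 : ℕ) : ℝ) * ((1 - x) ^ k * y ^ (k + 2) * (1 - y) + x ^ k * y * (1 - y) ^ (k + 2)) +
    (1 - x) ^ k * y ^ (k + 3) + x ^ k * (1 - y) ^ (k + 3)

lemma ksH_hasDerivAt (k : ℕ) (x y : ℝ) :
    HasDerivAt (ksH k x)
      (((k : ℝ) + 3) * (k + 2) * (y * (1 - y)) * (((1 - x) * y) ^ k - (x * (1 - y)) ^ k)) y := by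
  have hid : HasDerivAt (fun y : ℝ => y) 1 y := hasDerivAt_id y
  have hone : HasDerivAt (fun y : ℝ => 1 - y) (-1) y := by simpa using hid.const_sub 1
  have key := (((((hid.pow (k + 2)).const_mul ((1 - x) ^ k)).mul hone).add
    ((hid.const_mul (x ^ k)).mul (hone.pow (k + 2)))).const_mul ((k + 3 : ℕ) : ℝ)).add
    ((hid.pow (k + 3)).const_mul ((1 - x) ^ k)) |>.add
    ((hone.pow (k + 3)).const_mul (x ^ k))
  refine key.congr_deriv ?_
  simp only [show k + 2 - 1 = k + 1 by omega, show k + 3 - 1 = k + 2 by omega,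
    mul_pow, Pi.pow_apply]
  push_cast
  ring

lemma ksH_continuous (k : ℕ) : Continuous (fun p : ℝ × ℝ => ksH k p.1 p.2) := by
  unfold ksH
  fun_prop

/-- On `[0, 1]`, the function `h_x` has its strict global minimum at `y = x`. -/
lemma ksH_lt {k : ℕ} (hk : k ≠ 0) {x y : ℝ} (hx : x ∈ Set.Icc (0 : ℝ) 1)
    (hy : y ∈ Set.Icc (0 : ℝ) 1) (hne : y ≠ x) : ksH k x x < ksH k x y := by
  obtain ⟨hx0, hx1⟩ := hx
  obtain ⟨hy0, hy1⟩ := hy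
  have hcont : Continuous (ksH k x) :=
    continuous_iff_continuousAt.2 fun z => (ksH_hasDerivAt k x z).continuousAt
  rcases lt_or_gt_of_ne hne with h | h
  · have hanti : StrictAntiOn (ksH k x) (Set.Icc 0 x) := by
      refine strictAntiOn_of_deriv_neg (convex_Icc 0 x) hcont.continuousOn fun z hz => ?_
      rw [interior_Icc] at hz
      obtain ⟨hz0, hzx⟩ := hz
      rw [(ksH_hasDerivAt k x z).deriv]
      have hz1 : 0 < 1 - z := by linarith
      have hpow : ((1 - x) * z) ^ k < (x * (1 - z)) ^ k :=
        pow_lt_pow_left₀ (by nlinarith) (mul_nonneg (by linarith) hz0.le) hk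
      exact mul_neg_of_pos_of_neg (by positivity) (by linarith)
    exact hanti ⟨hy0, h.le⟩ ⟨hx0, le_rfl⟩ h
  · have hmono : StrictMonoOn (ksH k x) (Set.Icc x 1) := by
      refine strictMonoOn_of_deriv_pos (convex_Icc x 1) hcont.continuousOn fun z hz => ?_
      rw [interior_Icc] at hz
      obtain ⟨hzx, hz1'⟩ := hz
      rw [(ksH_hasDerivAt k x z).deriv]
      have hz0 : 0 < z := by linarith
      have hz1 : 0 < 1 - z := by linarith
      have hpow : (x * (1 - z)) ^ k < ((1 - x) * z) ^ k :=
        pow_lt_pow_left₀ (by nlinarith) (mul_nonneg hx0 hz1.le) hk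
      exact mul_pos (by positivity) (by linarith)
    exact hmono ⟨le_rfl, hx1⟩ ⟨h.le, hy1⟩ h

lemma ksH_integrableOn (k : ℕ) {G : ℝ → ℝ} (hGmeas : Measurable G)
    (hG : ∀ x ∈ Set.Icc (0 : ℝ) 1, G x ∈ Set.Icc (0 : ℝ) 1) :
    IntegrableOn (fun x => ksH k x (G x)) (Set.Icc (0 : ℝ) 1) := by
  -- `h` is bounded on the compact square, so the composite is bounded on `[0, 1]`.
  obtain ⟨C, hC⟩ := (isCompact_Icc.prod isCompact_Icc :
    IsCompact (Set.Icc (0 : ℝ) 1 ×ˢ Set.Icc (0 : ℝ) 1)).exists_bound_of_continuousOn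
    (ksH_continuous k).continuousOn
  refine Measure.integrableOn_of_bounded (M := C) (by simp) ?_ ?_
  · exact ((ksH_continuous k).measurable.comp
      (measurable_id.prodMk hGmeas)).aestronglyMeasurable
  · filter_upwards [ae_restrict_mem measurableSet_Icc] with x hx
    exact hC (x, G x) ⟨hx, hG x hx⟩

/-- Unbiasedness half of Theorem 3 for `m = n + 2`: for every measurable `G : [0,1] → [0,1]`,
`∫₀¹ h_x(G(x)) dx ≥ ∫₀¹ h_x(x) dx`, where
`h_x(y) = m((1−x)^{n−1} y^{m−1}(1−y) + x^{n−1} y(1−y)^{m−1}) + (1−x)^{n−1} y^m + x^{n−1}(1−y)^m`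
with `m = n + 2`, with equality iff `G(x) = x` for a.e. `x ∈ [0,1]`. -/
theorem ks_unbiased_m_eq_n_add_two (n : ℕ) (hn : 2 ≤ n)
    (G : ℝ → ℝ) (hGmeas : Measurable G)
    (hG : ∀ x ∈ Set.Icc (0:ℝ) 1, G x ∈ Set.Icc (0:ℝ) 1) :
    let m : ℕ := n + 2
    let h : ℝ → ℝ → ℝ := fun x y =>
      m * ((1 - x) ^ (n - 1) * y ^ (m - 1) * (1 - y) + x ^ (n - 1) * y * (1 - y) ^ (m - 1)) +
        (1 - x) ^ (n - 1) * y ^ m + x ^ (n - 1) * (1 - y) ^ m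
    (∫ x in Set.Icc (0:ℝ) 1, h x (G x) ≥ ∫ x in Set.Icc (0:ℝ) 1, h x x) ∧
    ((∫ x in Set.Icc (0:ℝ) 1, h x (G x) = ∫ x in Set.Icc (0:ℝ) 1, h x x) ↔
      (∀ᵐ x ∂(volume.restrict (Set.Icc (0:ℝ) 1)), G x = x)) := by
  intro m h
  obtain ⟨k, rfl⟩ : ∃ k, n = k + 1 := ⟨n - 1, by omega⟩
  have hk : k ≠ 0 := by omega
  have hh : h = ksH k := rfl
  rw [hh]
  have hintG := ksH_integrableOn k hGmeas hG
  have hint := ksH_integrableOn k measurable_id (fun _ hx => hx)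
  simp only [id] at hint
  have hle : ∀ x ∈ Set.Icc (0 : ℝ) 1, ksH k x x ≤ ksH k x (G x) := by
    intro x hx
    by_cases hGx : G x = x
    · rw [hGx]
    · exact (ksH_lt hk hx (hG x hx) hGx).le
  refine ⟨setIntegral_mono_on hint hintG measurableSet_Icc hle, ?_⟩
  have hnonneg : 0 ≤ᵐ[volume.restrict (Set.Icc (0 : ℝ) 1)]
      fun x => ksH k x (G x) - ksH k x x := by
    filter_upwards [ae_restrict_mem measurableSet_Icc] with x hx
    exact sub_nonneg.2 (hle x hx)
  rw [← sub_eq_zero, ← integral_sub hintG hint,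
    integral_eq_zero_iff_of_nonneg_ae hnonneg (hintG.sub hint)]
  constructor
  · intro hzero
    filter_upwards [hzero, ae_restrict_mem measurableSet_Icc] with x hx0 hx
    by_contra hGx
    exact (ksH_lt hk hx (hG x hx) hGx).ne' (sub_eq_zero.1 hx0)
  · intro hae
    filter_upwards [hae] with x hGx
    simp [hGx]
end

section
/- Let n and m be integers with n > m ≥ 2, n ≥ 4 and n ≠ m + 2, and define G : (0,1) → (0,1) by G(x) = s/(1+s) with s = (x/(1−x))^{(n−3)/(m−1)}. Then ∫₀¹ (x^{n−2}(1−x)(1−G(x))^m + x(1−x)^{n−2} G(x)^m) dx < ∫₀¹ (x^{n−2}(1−x)^{m+1} + x^{m+1}(1−x)^{n−2}) dx. -/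
/-!
For fixed `x ∈ (0,1)` put `a = x^(n-2) (1-x)` and `b = x (1-x)^(n-2)`. The convex function
`g ↦ a (1-g)^m + b g^m` has its critical point where `a (1-g)^(m-1) = b g^(m-1)`, that is
`(g/(1-g))^(m-1) = (x/(1-x))^(n-3)`, and this is solved by `g = G x`. Hence the left integrand is
the minimum of this function, while the right integrand is its value at `g = x`
(`two_term_pow_lt`, `two_term_pow_le`). The minimizer is unique and `G x ≠ x` for `x < 1/2`, because
the exponent `(n-3)/(m-1)` differs from `1` when `n ≠ m + 2`. The integrands are therefore
ordered everywhere on `(0,1]` and strictly on `(0,1/2)`.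
-/

/-- The graph of `x ↦ x^(k+1)` lies strictly above its tangent line at `g > 0`. -/
lemma tangent_lt_pow_s14 {k : ℕ} (hk : 1 ≤ k) {g x : ℝ} (hg : 0 < g) (hx : 0 < x) (hne : x ≠ g) :
    g ^ (k + 1) + (k + 1) * g ^ k * (x - g) < x ^ (k + 1) := by
  have h := one_add_mul_self_lt_rpow_one_add (s := x / g - 1) (p := ((k + 1 : ℕ) : ℝ))
    (by have := div_pos hx hg; linarith)
    (by rw [sub_ne_zero]; intro h; exact hne ((div_eq_one_iff_eq hg.ne').1 h))
    (by push_cast; have : (1 : ℝ) ≤ k := by exact_mod_cast hk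
        linarith)
  rw [Real.rpow_natCast, add_sub_cancel, div_pow, lt_div_iff₀ (by positivity)] at h
  have e : (1 + ((k + 1 : ℕ) : ℝ) * (x / g - 1)) * g ^ (k + 1)
      = g ^ (k + 1) + (k + 1) * g ^ k * (x - g) := by
    push_cast
    rw [pow_succ]
    field_simp
  rwa [e] at h

/-- The critical point `g` of `y ↦ a (1-y)^(k+1) + b y^(k+1)` is its strict minimizer: the
slopes of the two tangent lines at `g` cancel. -/
lemma two_term_pow_lt {k : ℕ} (hk : 1 ≤ k) {a b g x : ℝ} (ha : 0 < a) (hb : 0 < b)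
    (hg : 0 < g) (hg1 : g < 1) (hx : 0 < x) (hx1 : x < 1)
    (hc : a * (1 - g) ^ k = b * g ^ k) (hne : g ≠ x) :
    a * (1 - g) ^ (k + 1) + b * g ^ (k + 1) < a * (1 - x) ^ (k + 1) + b * x ^ (k + 1) := by
  have h1 := mul_lt_mul_of_pos_left (tangent_lt_pow_s14 hk hg hx hne.symm) hb
  have h2 := mul_lt_mul_of_pos_left
    (tangent_lt_pow_s14 hk (sub_pos.2 hg1) (sub_pos.2 hx1) (fun h => hne (by linarith))) ha
  have h3 : a * ((k + 1) * (1 - g) ^ k * (1 - x - (1 - g)))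
      + b * ((k + 1) * g ^ k * (x - g)) = 0 := by
    linear_combination ((k : ℝ) + 1) * (g - x) * hc
  rw [mul_add] at h1 h2
  linarith

lemma two_term_pow_le {k : ℕ} (hk : 1 ≤ k) {a b g x : ℝ} (ha : 0 < a) (hb : 0 < b)
    (hg : 0 < g) (hg1 : g < 1) (hx : 0 < x) (hx1 : x < 1)
    (hc : a * (1 - g) ^ k = b * g ^ k) :
    a * (1 - g) ^ (k + 1) + b * g ^ (k + 1) ≤ a * (1 - x) ^ (k + 1) + b * x ^ (k + 1) := by
  by_cases hne : g = x
  · rw [hne]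
  · exact (two_term_pow_lt hk ha hb hg hg1 hx hx1 hc hne).le

/-- Biasedness half of Theorem 3 for `n > m`: if `n > m ≥ 2`, `n ≥ 4`, `n ≠ m + 2`, and
`G(x) = s/(1+s)` with `s = (x/(1−x))^{(n−3)/(m−1)}`, then
`∫₀¹ (x^{n−2}(1−x)(1−G(x))^m + x(1−x)^{n−2} G(x)^m) dx <
 ∫₀¹ (x^{n−2}(1−x)^{m+1} + x^{m+1}(1−x)^{n−2}) dx`. -/
theorem ks_biased_second_level (n m : ℕ) (hm : 2 ≤ m) (hmn : m < n) (hn : 4 ≤ n)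
    (hne : n ≠ m + 2) :
    let G : ℝ → ℝ := fun x =>
      (x / (1 - x)) ^ (((n : ℝ) - 3) / ((m : ℝ) - 1)) /
        (1 + (x / (1 - x)) ^ (((n : ℝ) - 3) / ((m : ℝ) - 1)))
    (∫ x in (0:ℝ)..1,
        (x ^ (n - 2) * (1 - x) * (1 - G x) ^ m + x * (1 - x) ^ (n - 2) * (G x) ^ m)) <
    ∫ x in (0:ℝ)..1, (x ^ (n - 2) * (1 - x) ^ (m + 1) + x ^ (m + 1) * (1 - x) ^ (n - 2)) := by
  intro G
  obtain ⟨j, rfl⟩ : ∃ j, n = j + 3 := ⟨n - 3, by omega⟩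
  obtain ⟨k, rfl⟩ : ∃ k, m = k + 1 := ⟨m - 1, by omega⟩
  have hk : 1 ≤ k := by omega
  have hjk : j ≠ k := by omega
  have hk0 : (k : ℝ) ≠ 0 := by positivity
  have e2 : j + 3 - 2 = j + 1 := by omega
  rw [e2]
  set p : ℝ := (((j + 3 : ℕ) : ℝ) - 3) / (((k + 1 : ℕ) : ℝ) - 1) with hp
  have hp' : p = j / k := by rw [hp]; push_cast; ring
  have hp1 : p ≠ 1 := by
    rw [hp', Ne, div_eq_one_iff_eq hk0]
    exact_mod_cast hjk
  have hGdef : ∀ x, G x = (x / (1 - x)) ^ p / (1 + (x / (1 - x)) ^ p) := fun x => rfl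
  have hGmeas : Measurable G := by
    have : Measurable fun x : ℝ => (x / (1 - x)) ^ p := by fun_prop
    exact this.div (measurable_const.add this)
  have hr : ∀ x : ℝ, 0 < x → x < 1 → 0 < x / (1 - x) := fun x h0 h1 =>
    div_pos h0 (sub_pos.2 h1)
  have hGpos : ∀ x, 0 < x → x < 1 → 0 < G x := by
    intro x h0 h1
    have := Real.rpow_pos_of_pos (hr x h0 h1) p
    rw [hGdef]; positivity
  have hGlt : ∀ x, 0 < x → x < 1 → G x < 1 := by
    intro x h0 h1
    have := Real.rpow_pos_of_pos (hr x h0 h1) p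
    rw [hGdef, div_lt_one (by positivity)]; linarith
  have hcrit : ∀ x, 0 < x → x < 1 →
      x ^ (j + 1) * (1 - x) * (1 - G x) ^ k = x * (1 - x) ^ (j + 1) * (G x) ^ k := by
    intro x h0 h1
    have hs := Real.rpow_pos_of_pos (hr x h0 h1) p
    have hsk : ((x / (1 - x)) ^ p) ^ k = (x / (1 - x)) ^ j := by
      rw [← Real.rpow_natCast, ← Real.rpow_mul (hr x h0 h1).le, hp',
        div_mul_cancel₀ _ hk0, Real.rpow_natCast]
    have h1x : 0 < 1 - x := sub_pos.2 h1
    rw [hGdef]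
    generalize (x / (1 - x)) ^ p = s at hs hsk
    have : 1 - s / (1 + s) = 1 / (1 + s) := by field_simp; ring
    rw [this, div_pow, div_pow, hsk, div_pow]
    field_simp
    ring
  have hGne : ∀ x, 0 < x → x < 1 / 2 → G x ≠ x := by
    intro x h0 h1 h
    have h1x : 0 < 1 - x := by linarith
    have hr0 := hr x h0 (by linarith)
    have hs := Real.rpow_pos_of_pos hr0 p
    have hsr : (x / (1 - x)) ^ p = x / (1 - x) := by
      rw [hGdef, div_eq_iff (by positivity)] at h
      rw [eq_div_iff h1x.ne']
      linarith
    have hl := congrArg Real.log hsr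
    rw [Real.log_rpow hr0] at hl
    have hneg : Real.log (x / (1 - x)) < 0 :=
      Real.log_neg hr0 (by rw [div_lt_one h1x]; linarith)
    exact hp1 (mul_right_cancel₀ hneg.ne (by rw [hl, one_mul]))
  have hR : ∀ x : ℝ, x ^ (j + 1) * (1 - x) ^ (k + 1 + 1) + x ^ (k + 1 + 1) * (1 - x) ^ (j + 1)
      = x ^ (j + 1) * (1 - x) * (1 - x) ^ (k + 1) + x * (1 - x) ^ (j + 1) * x ^ (k + 1) :=
    fun x => by ring
  have hle : ∀ x ∈ Set.Ioc (0 : ℝ) 1,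
      x ^ (j + 1) * (1 - x) * (1 - G x) ^ (k + 1) + x * (1 - x) ^ (j + 1) * (G x) ^ (k + 1) ≤
      x ^ (j + 1) * (1 - x) ^ (k + 1 + 1) + x ^ (k + 1 + 1) * (1 - x) ^ (j + 1) := by
    rintro x ⟨h0, h1⟩
    rcases h1.eq_or_lt with rfl | h1
    · simp
    · have h1x : 0 < 1 - x := sub_pos.2 h1
      rw [hR]
      exact two_term_pow_le hk (by positivity) (by positivity) (hGpos x h0 h1) (hGlt x h0 h1)
        h0 h1 (hcrit x h0 h1)
  have hnonneg : ∀ x ∈ Set.Ioc (0 : ℝ) 1, 0 ≤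
      x ^ (j + 1) * (1 - x) * (1 - G x) ^ (k + 1) +
        x * (1 - x) ^ (j + 1) * (G x) ^ (k + 1) := by
    rintro x ⟨h0, h1⟩
    rcases h1.eq_or_lt with rfl | h1
    · simp
    · have h1x : 0 < 1 - x := sub_pos.2 h1
      have := hGpos x h0 h1
      have := sub_pos.2 (hGlt x h0 h1)
      positivity
  have hRint : IntervalIntegrable (fun x : ℝ => x ^ (j + 1) * (1 - x) ^ (k + 1 + 1) +
      x ^ (k + 1 + 1) * (1 - x) ^ (j + 1)) MeasureTheory.volume 0 1 :=
    Continuous.intervalIntegrable (by fun_prop) _ _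
  -- `G` jumps at `1`, so integrability on the left comes from domination, not continuity.
  have hLint : IntervalIntegrable (fun x : ℝ => x ^ (j + 1) * (1 - x) * (1 - G x) ^ (k + 1) +
      x * (1 - x) ^ (j + 1) * (G x) ^ (k + 1)) MeasureTheory.volume 0 1 := by
    refine hRint.mono_fun' (Measurable.aestronglyMeasurable (by fun_prop)) ?_
    rw [Set.uIoc_of_le zero_le_one]
    filter_upwards [MeasureTheory.ae_restrict_mem measurableSet_Ioc] with x hx
    rw [Real.norm_of_nonneg (hnonneg x hx)]
    exact hle x hx
  refine intervalIntegral.integral_lt_integral_of_ae_le_of_measure_setOfPred_lt_ne_zero zero_le_one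
    hLint hRint ?_ ?_
  · filter_upwards [MeasureTheory.ae_restrict_mem measurableSet_Ioc] with x hx
    exact hle x hx
  · have hsub : Set.Ioo (0 : ℝ) (1 / 2) ⊆ Set.Ioc 0 1 := fun x hx =>
      ⟨hx.1, by have := hx.2; linarith⟩
    have hpos : (MeasureTheory.volume.restrict (Set.Ioc (0 : ℝ) 1)) (Set.Ioo 0 (1 / 2)) ≠ 0 := by
      rw [MeasureTheory.Measure.restrict_apply measurableSet_Ioo,
        Set.inter_eq_left.2 hsub, Real.volume_Ioo]
      simp
    refine fun h => hpos (MeasureTheory.measure_mono_null ?_ h)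
    rintro x ⟨h0, h2⟩
    have h1 : x < 1 := by linarith
    have h1x : 0 < 1 - x := sub_pos.2 h1
    rw [Set.mem_ofPred_eq, hR]
    exact two_term_pow_lt hk (by positivity) (by positivity) (hGpos x h0 h1) (hGlt x h0 h1)
      h0 h1 (hcrit x h0 h1) (hGne x h0 h2)
end

section
/- For every measurable function G : [0,1] → [0,1], 60·∫₀¹ (x³(1−x)²(1−G(x))² + x²(1−x)³ G(x)²) dx ≥ 3/7, with equality if G(x) = x for all x ∈ [0,1]. -/
/-!
Completing the square in `g` gives `x(1-g)² + (1-x)g² = (g-x)² + x(1-x)`, so the integrand is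
`x²(1-x)²(G(x)-x)² + x³(1-x)³`. It dominates `x³(1-x)³` pointwise, with equality when `G(x) = x`,
and `60·∫₀¹ x³(1-x)³ dx = 60/140 = 3/7`. Boundedness of `G` on `[0,1]` makes the integrand
integrable, so that the pointwise bound passes to the integrals.
-/

open MeasureTheory

lemma integral_cube_mul_one_sub_cube :
    ∫ x in (0:ℝ)..1, x ^ 3 * (1 - x) ^ 3 = 1 / 140 := by
  have h : ∀ x : ℝ, x ^ 3 * (1 - x) ^ 3 = x ^ 3 - 3 * x ^ 4 + 3 * x ^ 5 - x ^ 6 := by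
    intro x
    ring
  simp_rw [h]
  rw [intervalIntegral.integral_sub (Continuous.intervalIntegrable (by fun_prop) _ _)
      (Continuous.intervalIntegrable (by fun_prop) _ _),
    intervalIntegral.integral_add (Continuous.intervalIntegrable (by fun_prop) _ _)
      (Continuous.intervalIntegrable (by fun_prop) _ _),
    intervalIntegral.integral_sub (Continuous.intervalIntegrable (by fun_prop) _ _)
      (Continuous.intervalIntegrable (by fun_prop) _ _)]
  simp only [intervalIntegral.integral_const_mul, integral_pow]
  norm_num

/-- For `n = 6`, `m = 2`, the two-sample Kolmogorov–Smirnov test is unbiased at level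
`α₃ = 3/7`: for every measurable `G : [0,1] → [0,1]`,
`60·∫₀¹ (x³(1−x)²(1−G(x))² + x²(1−x)³ G(x)²) dx ≥ 3/7`, with equality if `G(x) = x` on `[0,1]`. -/
theorem ks_unbiased_six_two (G : ℝ → ℝ) (hGmeas : Measurable G)
    (hG : ∀ x ∈ Set.Icc (0:ℝ) 1, G x ∈ Set.Icc (0:ℝ) 1) :
    60 * ∫ x in (0:ℝ)..1,
        (x ^ 3 * (1 - x) ^ 2 * (1 - G x) ^ 2 + x ^ 2 * (1 - x) ^ 3 * (G x) ^ 2) ≥ 3 / 7 ∧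
    ((∀ x ∈ Set.Icc (0:ℝ) 1, G x = x) →
      60 * ∫ x in (0:ℝ)..1,
        (x ^ 3 * (1 - x) ^ 2 * (1 - G x) ^ 2 + x ^ 2 * (1 - x) ^ 3 * (G x) ^ 2) = 3 / 7) := by
  have key : ∀ x g : ℝ, x ^ 3 * (1 - x) ^ 2 * (1 - g) ^ 2 + x ^ 2 * (1 - x) ^ 3 * g ^ 2
      = x ^ 3 * (1 - x) ^ 3 + (x * (1 - x) * (g - x)) ^ 2 := by
    intro x g
    ring
  simp_rw [key]
  constructor
  · have hint : IntervalIntegrable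
        (fun x => x ^ 3 * (1 - x) ^ 3 + (x * (1 - x) * (G x - x)) ^ 2) volume 0 1 := by
      refine IntervalIntegrable.add (Continuous.intervalIntegrable (by fun_prop) _ _) ?_
      rw [intervalIntegrable_iff_integrableOn_Icc_of_le zero_le_one]
      refine Measure.integrableOn_of_bounded (M := 1) (by simp)
        (by fun_prop : Measurable _).aestronglyMeasurable ?_
      filter_upwards [ae_restrict_mem measurableSet_Icc] with x hx
      obtain ⟨hg0, hg1⟩ := hG x hx
      obtain ⟨hx0, hx1⟩ := hx
      have h1 : |x * (1 - x) * (G x - x)| ≤ 1 := by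
        rw [abs_mul, abs_of_nonneg (mul_nonneg hx0 (by linarith))]
        exact mul_le_one₀ (by nlinarith) (abs_nonneg _) (abs_le.2 ⟨by linarith, by linarith⟩)
      rw [Real.norm_eq_abs, abs_pow]
      exact pow_le_one₀ (abs_nonneg _) h1
    have hmono := intervalIntegral.integral_mono_on zero_le_one
      (Continuous.intervalIntegrable (μ := volume)
        (by fun_prop : Continuous fun x : ℝ => x ^ 3 * (1 - x) ^ 3) 0 1) hint
      (fun x _ => le_add_of_nonneg_right (sq_nonneg _))
    rw [integral_cube_mul_one_sub_cube] at hmono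
    linarith
  · intro h
    have hcongr : ∫ x in (0:ℝ)..1, (x ^ 3 * (1 - x) ^ 3 + (x * (1 - x) * (G x - x)) ^ 2)
        = ∫ x in (0:ℝ)..1, x ^ 3 * (1 - x) ^ 3 := by
      refine intervalIntegral.integral_congr fun x hx => ?_
      rw [Set.uIcc_of_le zero_le_one] at hx
      simp [h x hx]
    rw [hcongr, integral_cube_mul_one_sub_cube]
    norm_num
end

section
/- For every measurable function G : [0,1] → [0,1], 105·∫₀¹ (x⁴(1−x)²(1−G(x))³ + x²(1−x)⁴ G(x)³) dx ≥ 1/6, with equality if G(x) = x for all x ∈ [0,1]. -/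
/-!
For fixed `x ∈ [0,1]` the integrand is minimised over `g = G x ∈ [0,1]` at `g = x`: the bound
`t³ ≥ a³ + 3a²(t - a)` for `t, a ≥ 0`, applied to `t = 1 - g, a = 1 - x` and to `t = g, a = x`, has
linear terms that cancel after weighting by `x²` and `(1 - x)²`. The minimum value is `x⁴(1 - x)⁴`
(`integrand_ge`), whose integral is the Beta value `B(5,5) = 1/630` (`integral_min`), and
`105/630 = 1/6`.
-/

open MeasureTheory

theorem integrand_ge {x g : ℝ} (hx : x ∈ Set.Icc (0:ℝ) 1) (hg : g ∈ Set.Icc (0:ℝ) 1) :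
    x ^ 4 * (1 - x) ^ 4 ≤ x ^ 4 * (1 - x) ^ 2 * (1 - g) ^ 3 + x ^ 2 * (1 - x) ^ 4 * g ^ 3 := by
  obtain ⟨hx0, hx1⟩ := hx
  obtain ⟨hg0, hg1⟩ := hg
  -- The remainders come from `t³ - 3a²t + 2a³ = (t - a)²(t + 2a)`.
  have key : x ^ 4 * (1 - x) ^ 2 * (1 - g) ^ 3 + x ^ 2 * (1 - x) ^ 4 * g ^ 3
      = x ^ 4 * (1 - x) ^ 4 + x ^ 2 * (1 - x) ^ 2 * (x - g) ^ 2 *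
        (x ^ 2 * ((1 - g) + 2 * (1 - x)) + (1 - x) ^ 2 * (g + 2 * x)) := by ring
  have h1 : 0 ≤ 1 - x := by linarith
  have h2 : 0 ≤ 1 - g := by linarith
  rw [key]
  exact le_add_of_nonneg_right (by positivity)

theorem integral_min : ∫ x in (0:ℝ)..1, x ^ 4 * (1 - x) ^ 4 = 1 / 630 := by
  have hF : ∀ x ∈ Set.uIcc (0:ℝ) 1, HasDerivAt
      (fun x : ℝ => x ^ 5 / 5 - 2 * x ^ 6 / 3 + 6 * x ^ 7 / 7 - x ^ 8 / 2 + x ^ 9 / 9)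
      (x ^ 4 * (1 - x) ^ 4) x := by
    intro x _
    have h := (((((hasDerivAt_pow 5 x).div_const 5).sub
      (((hasDerivAt_pow 6 x).const_mul 2).div_const 3)).add
      (((hasDerivAt_pow 7 x).const_mul 6).div_const 7)).sub
      ((hasDerivAt_pow 8 x).div_const 2)).add ((hasDerivAt_pow 9 x).div_const 9)
    refine h.congr_deriv ?_
    norm_num
    ring
  rw [intervalIntegral.integral_eq_sub_of_hasDerivAt hF
    (Continuous.intervalIntegrable (by fun_prop) _ _)]
  norm_num

/-- For `n = 7`, `m = 3`, the two-sample Kolmogorov–Smirnov test is unbiased at level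
`α₃ = 1/6`: for every measurable `G : [0,1] → [0,1]`,
`105·∫₀¹ (x⁴(1−x)²(1−G(x))³ + x²(1−x)⁴ G(x)³) dx ≥ 1/6`, with equality if `G(x) = x` on `[0,1]`. -/
theorem ks_unbiased_seven_three (G : ℝ → ℝ) (hGmeas : Measurable G)
    (hG : ∀ x ∈ Set.Icc (0:ℝ) 1, G x ∈ Set.Icc (0:ℝ) 1) :
    105 * ∫ x in (0:ℝ)..1,
        (x ^ 4 * (1 - x) ^ 2 * (1 - G x) ^ 3 + x ^ 2 * (1 - x) ^ 4 * (G x) ^ 3) ≥ 1 / 6 ∧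
    ((∀ x ∈ Set.Icc (0:ℝ) 1, G x = x) →
      105 * ∫ x in (0:ℝ)..1,
        (x ^ 4 * (1 - x) ^ 2 * (1 - G x) ^ 3 + x ^ 2 * (1 - x) ^ 4 * (G x) ^ 3) = 1 / 6) := by
  constructor
  · have hint : IntervalIntegrable (fun x => x ^ 4 * (1 - x) ^ 2 * (1 - G x) ^ 3
        + x ^ 2 * (1 - x) ^ 4 * (G x) ^ 3) volume 0 1 := by
      rw [intervalIntegrable_iff_integrableOn_Icc_of_le zero_le_one]
      -- The integrand is measurable, and bounded by 2 on `[0,1]`.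
      refine Measure.integrableOn_of_bounded (M := 2) (by simp) ?_ ?_
      · exact Measurable.aestronglyMeasurable (by fun_prop)
      · filter_upwards [ae_restrict_mem measurableSet_Icc] with x hx
        obtain ⟨hg0, hg1⟩ := hG x hx
        obtain ⟨hx0, hx1⟩ := hx
        have h1 : 0 ≤ 1 - x := by linarith
        have h2 : 0 ≤ 1 - G x := by linarith
        have h3 : 1 - x ≤ 1 := by linarith
        have h4 : 1 - G x ≤ 1 := by linarith
        rw [Real.norm_of_nonneg (by positivity)]
        calc _ ≤ (1:ℝ) ^ 4 * 1 ^ 2 * 1 ^ 3 + 1 ^ 2 * 1 ^ 4 * 1 ^ 3 := by gcongr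
          _ = 2 := by norm_num
    have hmono := intervalIntegral.integral_mono_on (μ := volume) zero_le_one
      (Continuous.intervalIntegrable (u := fun x : ℝ => x ^ 4 * (1 - x) ^ 4) (by fun_prop) 0 1)
      hint (fun x hx => integrand_ge hx (hG x hx))
    rw [integral_min] at hmono
    linarith
  · intro h
    have hcongr : ∫ x in (0:ℝ)..1,
        (x ^ 4 * (1 - x) ^ 2 * (1 - G x) ^ 3 + x ^ 2 * (1 - x) ^ 4 * (G x) ^ 3)
        = ∫ x in (0:ℝ)..1, x ^ 4 * (1 - x) ^ 4 := by
      refine intervalIntegral.integral_congr fun x hx => ?_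
      rw [Set.uIcc_of_le zero_le_one] at hx
      simp only [h x hx]
      ring
    rw [hcongr, integral_min]
    norm_num
end
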